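/- For every deterministic online bin-packing algorithm for L-shapes and every integer n ≥ 2, there exists a sequence of n pairwise distinct L-shapes from the family 𝓛^n that admits a valid packing into a single unit bin, yet the algorithm assigns these n L-shapes to at least n/log₂(n+1) pairwise distinct bins. In particular, the asymptotic competitive ratio of every online algorithm for translational bin packing of L-shapes is Ω(n/log n). -/

import Mathlib

/-- An L-shape, given by its four parameters: arm lengths `lx, ly` and widths `wx, wy`. -/
structure LShape where
  lx : ℝ
  wx : ℝ
  ly : ℝ
  wy : ℝ

/-- The parameter constraints of an L-shape: `0 ≤ wx ≤ lx ≤ 1` and `0 ≤ wy ≤ ly ≤ 1`. -/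
def LShape.IsValid (L : LShape) : Prop :=
  0 ≤ L.wx ∧ L.wx ≤ L.lx ∧ L.lx ≤ 1 ∧ 0 ≤ L.wy ∧ L.wy ≤ L.ly ∧ L.ly ≤ 1

/-- The point set `([0,lx]×[0,wy]) ∪ ([0,wx]×[0,ly])` of an L-shape (reference point at the
origin). -/
def LShape.toSet (L : LShape) : Set (ℝ × ℝ) :=
  Set.Icc ((0, 0) : ℝ × ℝ) (L.lx, L.wy) ∪ Set.Icc ((0, 0) : ℝ × ℝ) (L.wx, L.ly)

/-- Translate a set in the plane by a vector. -/
def planeTranslate (v : ℝ × ℝ) (S : Set (ℝ × ℝ)) : Set (ℝ × ℝ) := (· + v) '' S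

/-- The unit bin `[0,1]²`. -/
def unitBin : Set (ℝ × ℝ) := Set.Icc ((0, 0) : ℝ × ℝ) (1, 1)

/-- The family `𝓛^k`: the L-shape `L_i` has `ℓx = 1/2 + 1/(2k)`, `wx = 1/(2k)`,
`ℓy = 1 − 2^(−i−1)`, `wy = 2^(−i−1)`. -/
noncomputable def Lfam (k i : ℕ) : LShape :=
  ⟨1 / 2 + 1 / (2 * k), 1 / (2 * k), 1 - 1 / 2 ^ (i + 1), 1 / 2 ^ (i + 1)⟩

/-- The online decision (bin index, translation vector) made by algorithm `A` for the `i`-th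
item of the list `l`: it depends only on the first `i+1` items. -/
def placeOf (A : List LShape → ℕ × ℝ × ℝ) (l : List LShape) (i : Fin l.length) : ℕ × ℝ × ℝ :=
  A (l.take (i.1 + 1))

/-- The placements produced by `A` on input `l` form valid bin packings: each translate lies
in the unit bin, and items in the same bin have pairwise disjoint interiors. -/
def OnlinePacks (A : List LShape → ℕ × ℝ × ℝ) (l : List LShape) : Prop :=
  (∀ i : Fin l.length, planeTranslate (placeOf A l i).2 (l.get i).toSet ⊆ unitBin) ∧
  ∀ i j : Fin l.length, i ≠ j → (placeOf A l i).1 = (placeOf A l j).1 →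
    Disjoint (interior (planeTranslate (placeOf A l i).2 (l.get i).toSet))
             (interior (planeTranslate (placeOf A l j).2 (l.get j).toSet))

/-- The number of distinct bins used by `A` on input `l`. -/
def binsUsed (A : List LShape → ℕ × ℝ × ℝ) (l : List LShape) : ℕ :=
  ((Finset.univ : Finset (Fin l.length)).image fun i => (placeOf A l i).1).card

/-!
Let two members of `𝓛ⁿ` share a bin. They are too tall to be stacked, and the horizontal arm of the
left one reaches beyond the vertical arm of the right one, so it passes below it. There is room for
this only if the left one has the larger index. So in every bin the vertical arms, of width
`w = 1/(2n)`, appear inside `[0, 1/2]` by decreasing index from left to right. Conversely this order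
is enough to pack `n` distinct members into a single bin.

The adversary bisects. It keeps an interval of indices from which all later items are taken; in a
bin `B` their vertical arms are then confined to an interval `[p, q]`. When an item of index `c` is
placed into `B` at `x`, later indices are restricted either to those above `c`, which confines the
arms to `[p, x]`, or to those below `c`, which confines them to `[x + w, q]`. The lengths of these
two intervals add up to `q - p - w`, so one of the two choices at least halves `q - p + w`. This
quantity is `1/2 + w` initially and never drops below `w`, so a bin receives at most `log₂ (n + 1)`
items.
-/

open Set Function

namespace LShape

variable {L M : LShape} {u v : ℝ × ℝ}

lemma planeTranslate_toSet (L : LShape) (v : ℝ × ℝ) :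
    planeTranslate v L.toSet = Icc v (v + (L.lx, L.wy)) ∪ Icc v (v + (L.wx, L.ly)) := by
  simp only [planeTranslate, toSet, image_union, image_add_const_Icc, Prod.mk_zero_zero, zero_add,
    add_comm v]

lemma planeTranslate_toSet_subset_Ici (L : LShape) (v : ℝ × ℝ) :
    planeTranslate v L.toSet ⊆ Ici v := by
  rw [planeTranslate_toSet]
  exact union_subset Icc_subset_Ici_self Icc_subset_Ici_self

lemma horizontalArm_subset_interior (L : LShape) (v : ℝ × ℝ) :
    Ioo v.1 (v.1 + L.lx) ×ˢ Ioo v.2 (v.2 + L.wy) ⊆ interior (planeTranslate v L.toSet) := by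
  rw [planeTranslate_toSet, ← interior_Icc, ← interior_Icc, ← interior_prod_eq]
  exact interior_mono ((Icc_prod_eq v (v + (L.lx, L.wy))).symm.subset.trans subset_union_left)

lemma verticalArm_subset_interior (L : LShape) (v : ℝ × ℝ) :
    Ioo v.1 (v.1 + L.wx) ×ˢ Ioo v.2 (v.2 + L.ly) ⊆ interior (planeTranslate v L.toSet) := by
  rw [planeTranslate_toSet, ← interior_Icc, ← interior_Icc, ← interior_prod_eq]
  exact interior_mono ((Icc_prod_eq v (v + (L.wx, L.ly))).symm.subset.trans subset_union_right)

lemma IsValid.planeTranslate_subset_unitBin_iff (hL : L.IsValid) :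
    planeTranslate v L.toSet ⊆ unitBin ↔
      0 ≤ v.1 ∧ 0 ≤ v.2 ∧ v.1 + L.lx ≤ 1 ∧ v.2 + L.ly ≤ 1 := by
  obtain ⟨hwx, hwlx, -, hwy, hwly, -⟩ := hL
  have hhor : v ≤ v + (L.lx, L.wy) := le_add_of_nonneg_right ⟨hwx.trans hwlx, hwy⟩
  have hver : v ≤ v + (L.wx, L.ly) := le_add_of_nonneg_right ⟨hwx, hwy.trans hwly⟩
  rw [planeTranslate_toSet, unitBin, union_subset_iff, Icc_subset_Icc_iff hhor,
    Icc_subset_Icc_iff hver]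
  simp only [Prod.le_def, Prod.fst_add, Prod.snd_add]
  constructor
  · rintro ⟨⟨⟨hx, hy⟩, hlx, -⟩, -, -, hly⟩
    exact ⟨hx, hy, hlx, hly⟩
  · rintro ⟨hx, hy, hlx, hly⟩
    exact ⟨⟨⟨hx, hy⟩, hlx, by linarith⟩, ⟨hx, hy⟩, by linarith, hly⟩

lemma disjoint_interior_of_corner_le (hx : u.1 + L.wx ≤ v.1) (hy : u.2 + L.wy ≤ v.2) :
    Disjoint (interior (planeTranslate u L.toSet)) (interior (planeTranslate v M.toSet)) := by
  rw [disjoint_left]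
  intro z hzL hzM
  have hz : z ∈ Ioi v.1 ×ˢ Ioi v.2 := by
    rw [← interior_Ici, ← interior_Ici, ← interior_prod_eq, ← Ici_prod_eq]
    exact interior_mono (planeTranslate_toSet_subset_Ici M v) hzM
  obtain ⟨hzx : v.1 < z.1, hzy : v.2 < z.2⟩ := hz
  rw [planeTranslate_toSet] at hzL
  rcases interior_subset hzL with ⟨-, -, hle⟩ | ⟨-, hle, -⟩
  · exact (hle.trans hy).not_gt hzy
  · exact (hle.trans hx).not_gt hzx

section LeftToRight

variable (hL : L.IsValid) (hM : M.IsValid)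
  (hu : planeTranslate u L.toSet ⊆ unitBin) (hv : planeTranslate v M.toSet ⊆ unitBin)
  (hd : Disjoint (interior (planeTranslate u L.toSet)) (interior (planeTranslate v M.toSet)))
include hL hM hu hv hd

lemma add_wx_le_of_fst_le (hMx : 0 < M.wx) (htall : 1 < L.ly + M.ly) (hle : u.1 ≤ v.1) :
    u.1 + L.wx ≤ v.1 := by
  obtain ⟨-, huy, -, huy'⟩ := hL.planeTranslate_subset_unitBin_iff.1 hu
  obtain ⟨-, hvy, -, hvy'⟩ := hM.planeTranslate_subset_unitBin_iff.1 hv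
  have harms := hd.mono (verticalArm_subset_interior L u) (verticalArm_subset_interior M v)
  rw [disjoint_prod, Ioo_disjoint_Ioo, Ioo_disjoint_Ioo] at harms
  have hheight : max u.2 v.2 < min (u.2 + L.ly) (v.2 + M.ly) := by
    apply max_lt <;> apply lt_min <;> linarith
  have hside := harms.resolve_right hheight.not_ge
  rw [max_eq_right hle, min_le_iff] at hside
  exact hside.resolve_right (by linarith)

/-- Otherwise the horizontal arm of `M` would have to pass below the vertical arm of `L`, where it
is too thick to fit. -/
lemma fst_le_of_one_lt_ly_add_wy (hLx : 0 < L.wx) (hreach : 1 < L.lx + M.lx)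
    (hthick : 1 < L.ly + M.wy) : u.1 ≤ v.1 := by
  have hwy : M.wy ≤ M.ly := hM.2.2.2.2.1
  have hly : L.ly ≤ 1 := hL.2.2.2.2.2
  obtain ⟨-, huy, hux', huy'⟩ := hL.planeTranslate_subset_unitBin_iff.1 hu
  obtain ⟨hvx, hvy, -, hvy'⟩ := hM.planeTranslate_subset_unitBin_iff.1 hv
  have harms := hd.mono (verticalArm_subset_interior L u) (horizontalArm_subset_interior M v)
  rw [disjoint_prod, Ioo_disjoint_Ioo, Ioo_disjoint_Ioo] at harms
  have hheight : max u.2 v.2 < min (u.2 + L.ly) (v.2 + M.wy) := by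
    apply max_lt <;> apply lt_min <;> linarith
  have hside := harms.resolve_right hheight.not_ge
  contrapose! hside
  apply max_lt <;> apply lt_min <;> linarith

end LeftToRight

end LShape

section Family

open LShape

variable {n i j : ℕ}

lemma Lfam_isValid (n i : ℕ) : (Lfam n i).IsValid := by
  have hwx : 1 / (2 * (n : ℝ)) ≤ 1 / 2 := by
    rw [one_div, mul_inv]
    linarith [Nat.cast_inv_le_one (α := ℝ) n]
  have hwx₀ : 0 ≤ 1 / (2 * (n : ℝ)) := by positivity
  have hwy : 1 / (2 : ℝ) ^ (i + 1) ≤ 1 / 2 ^ 1 :=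
    one_div_pow_le_one_div_pow_of_le one_le_two (by omega)
  have hwy₀ : 0 ≤ 1 / (2 : ℝ) ^ (i + 1) := by positivity
  refine ⟨?_, ?_, ?_, ?_, ?_, ?_⟩ <;> simp only [Lfam] <;> linarith

lemma Lfam_add_le_of_disjoint {u v : ℝ × ℝ} (hn : n ≠ 0) (hij : j < i)
    (hu : planeTranslate u (Lfam n i).toSet ⊆ unitBin)
    (hv : planeTranslate v (Lfam n j).toSet ⊆ unitBin)
    (hd : Disjoint (interior (planeTranslate u (Lfam n i).toSet))
      (interior (planeTranslate v (Lfam n j).toSet))) :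
    u.1 + 1 / (2 * n) ≤ v.1 := by
  have hwx : ∀ k, 0 < (Lfam n k).wx := fun k => by simp only [Lfam]; positivity
  have hreach : 1 < (Lfam n i).lx + (Lfam n j).lx := by
    have := hwx i
    simp only [Lfam] at this ⊢
    linarith
  have hthick : 1 < (Lfam n i).ly + (Lfam n j).wy := by
    have : 1 / (2 : ℝ) ^ (i + 1) < 1 / 2 ^ (j + 1) :=
      one_div_pow_lt_one_div_pow_of_lt one_lt_two (by omega)
    simp only [Lfam]
    linarith
  have hLi := Lfam_isValid n i
  have hLj := Lfam_isValid n j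
  have htall : 1 < (Lfam n i).ly + (Lfam n j).ly :=
    hthick.trans_le (add_le_add_right hLj.2.2.2.2.1 _)
  exact add_wx_le_of_fst_le hLi hLj hu hv hd (hwx j) htall
    (fst_le_of_one_lt_ly_add_wy hLi hLj hu hv hd (hwx i) hreach hthick)

lemma Lfam_disjoint_of_add_le {x x' : ℝ} (hij : j < i) (hx : x + 1 / (2 * n) ≤ x') :
    Disjoint (interior (planeTranslate (x, (Lfam n i).wy) (Lfam n i).toSet))
      (interior (planeTranslate (x', (Lfam n j).wy) (Lfam n j).toSet)) := by
  refine disjoint_interior_of_corner_le hx ?_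
  calc 1 / (2 : ℝ) ^ (i + 1) + 1 / 2 ^ (i + 1) = 1 / 2 ^ i := by field_simp; ring
    _ ≤ 1 / 2 ^ (j + 1) := one_div_pow_le_one_div_pow_of_le one_le_two hij

/-- The translates of the shapes `L i` by `v i` form a valid packing of a single unit bin. -/
def IsUnitBinPacking {ι : Type*} (L : ι → LShape) (v : ι → ℝ × ℝ) : Prop :=
  (∀ i, planeTranslate (v i) (L i).toSet ⊆ unitBin) ∧
    ∀ i j, i ≠ j → Disjoint (interior (planeTranslate (v i) (L i).toSet))
      (interior (planeTranslate (v j) (L j).toSet))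

variable {ι : Type*} {idx : ι → ℕ}

lemma isUnitBinPacking_Lfam_of_rank {r : ι → ℕ} (hidx : Injective idx)
    (hrn : ∀ i, r i < n) (hr : ∀ i j, idx i < idx j → r j < r i) :
    IsUnitBinPacking (fun i => Lfam n (idx i))
      fun i => ((r i : ℝ) / (2 * n), (Lfam n (idx i)).wy) := by
  have hright : ∀ {s t : ℕ}, s < t → (s : ℝ) / (2 * n) + 1 / (2 * n) ≤ t / (2 * n) := by
    intro s t hst
    rw [← add_div]
    gcongr
    exact_mod_cast hst
  refine ⟨fun i => ?_, fun i j hij => ?_⟩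
  · rw [(Lfam_isValid n (idx i)).planeTranslate_subset_unitBin_iff]
    have hhalf : (n : ℝ) / (2 * n) = 1 / 2 := by
      have : (n : ℝ) ≠ 0 := by exact_mod_cast (Nat.zero_le (r i)).trans_lt (hrn i) |>.ne'
      field_simp
    have hlx := hright (hrn i)
    simp only [Lfam]
    exact ⟨by positivity, by positivity, by linarith, by linarith⟩
  · rcases (hidx.ne hij).lt_or_gt with hlt | hlt
    · exact (Lfam_disjoint_of_add_le hlt (hright (hr i j hlt))).symm
    · exact Lfam_disjoint_of_add_le hlt (hright (hr j i hlt))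

lemma exists_isUnitBinPacking_Lfam [Fintype ι] (hcard : Fintype.card ι ≤ n)
    (hidx : Injective idx) : ∃ v, IsUnitBinPacking (fun i => Lfam n (idx i)) v := by
  refine ⟨_, isUnitBinPacking_Lfam_of_rank (r := fun i => Finset.card {j | idx i < idx j}) hidx
    (fun i => ?_) fun i j hij => ?_⟩
  · exact (Finset.card_lt_univ_of_notMem (x := i) (by simp)).trans_le hcard
  · refine Finset.card_lt_card (Finset.ssubset_iff_of_subset (fun k hk => ?_) |>.2 ⟨j, ?_, ?_⟩)
    · simp only [Finset.mem_filter_univ] at hk ⊢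
      exact hij.trans hk
    · simpa using hij
    · simp

end Family

namespace OnlinePacks

variable {A : List LShape → ℕ × ℝ × ℝ} {l t : List LShape} {L M : LShape}

lemma subset_unitBin (h : OnlinePacks A (l ++ [L])) :
    planeTranslate (A (l ++ [L])).2 L.toSet ⊆ unitBin := by
  have hlast := h.1 ⟨l.length, by simp⟩
  rw [placeOf, List.take_of_length_le (by simp)] at hlast
  simpa using hlast

lemma disjoint_interior (h : OnlinePacks A (l ++ L :: (t ++ [M])))
    (hbin : (A (l ++ [L])).1 = (A (l ++ L :: (t ++ [M]))).1) :
    Disjoint (interior (planeTranslate (A (l ++ [L])).2 L.toSet))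
      (interior (planeTranslate (A (l ++ L :: (t ++ [M]))).2 M.toSet)) := by
  have htake : (l ++ L :: (t ++ [M])).take (l.length + 1) = l ++ [L] := by
    simp [List.take_append, List.take_of_length_le]
  have htake' : (l ++ L :: (t ++ [M])).take (l.length + (t.length + 1) + 1) =
      l ++ L :: (t ++ [M]) := List.take_of_length_le (by simp; omega)
  have hpair := h.2 ⟨l.length, by simp⟩ ⟨l.length + (t.length + 1), by simp⟩ (by simp)
  simp only [placeOf, htake, htake'] at hpair
  simpa using hpair hbin

end OnlinePacks

section Bisection

variable {ι β : Type*}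

/-- The bins chosen by an online algorithm for the successive items of a list: `place` maps a
nonempty sequence of items to the bin and the position of its last item. -/
def binSequence (place : List ι → β × ℝ) (l : List ι) : List β :=
  List.ofFn fun i : Fin l.length => (place (l.take (i + 1))).1

lemma length_binSequence (place : List ι → β × ℝ) (l : List ι) :
    (binSequence place l).length = l.length :=
  List.length_ofFn

lemma binSequence_cons (place : List ι → β × ℝ) (c : ι) (l : List ι) :
    binSequence place (c :: l) =
      (place [c]).1 :: binSequence (fun t => place (c :: t)) l := by
  simp [binSequence, List.ofFn_succ]

/-- The online algorithm `place` puts items of width `w` that share a bin side by side, by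
decreasing index from left to right. Histories are arbitrary lists, so the property passes to the
algorithm `fun t => place (c :: t)` that has already seen the item `c`. -/
def PlacesByDecreasingIndex [LT ι] (place : List ι → β × ℝ) (w : ℝ) : Prop :=
  ∀ l c t d, (place (l ++ [c])).1 = (place (l ++ c :: (t ++ [d]))).1 →
    (c < d → (place (l ++ c :: (t ++ [d]))).2 + w ≤ (place (l ++ [c])).2) ∧
    (d < c → (place (l ++ [c])).2 + w ≤ (place (l ++ c :: (t ++ [d]))).2)

/-- Whatever came before, the online algorithm `place` puts items of width `w` with index in `s`
into the interval `[p B, q B]` of the bin `B` that it chooses. -/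
def ConfinedTo (place : List ι → β × ℝ) (w : ℝ) (s : Set ι) (p q : β → ℝ) : Prop :=
  ∀ l, ∀ c ∈ s, p (place (l ++ [c])).1 ≤ (place (l ++ [c])).2 ∧
    (place (l ++ [c])).2 + w ≤ q (place (l ++ [c])).1

section Confinement

variable [LT ι] {place : List ι → β × ℝ} {w : ℝ}

lemma PlacesByDecreasingIndex.cons (hplace : PlacesByDecreasingIndex place w) (c : ι) :
    PlacesByDecreasingIndex (fun l => place (c :: l)) w :=
  fun l => hplace (c :: l)

variable [DecidableEq β] {p q : β → ℝ} {s t : Set ι} {c : ι}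

lemma ConfinedTo.above (hconf : ConfinedTo place w s p q) (hplace : PlacesByDecreasingIndex place w)
    (hts : t ⊆ s) (hct : ∀ d ∈ t, c < d) :
    ConfinedTo (fun l => place (c :: l)) w t p (update q (place [c]).1 (place [c]).2) := by
  intro l d hd
  obtain ⟨hp, hq⟩ := hconf (c :: l) d (hts hd)
  refine ⟨hp, ?_⟩
  by_cases hbin : (place [c]).1 = (place (c :: (l ++ [d]))).1
  · rw [← hbin, update_self]
    exact (hplace [] c l d hbin).1 (hct d hd)
  · rwa [update_of_ne (Ne.symm hbin)]

lemma ConfinedTo.below (hconf : ConfinedTo place w s p q) (hplace : PlacesByDecreasingIndex place w)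
    (hts : t ⊆ s) (hct : ∀ d ∈ t, d < c) :
    ConfinedTo (fun l => place (c :: l)) w t (update p (place [c]).1 ((place [c]).2 + w)) q := by
  intro l d hd
  obtain ⟨hp, hq⟩ := hconf (c :: l) d (hts hd)
  refine ⟨?_, hq⟩
  by_cases hbin : (place [c]).1 = (place (c :: (l ++ [d]))).1
  · rw [← hbin, update_self]
    exact (hplace [] c l d hbin).2 (hct d hd)
  · rwa [update_of_ne (Ne.symm hbin)]

end Confinement

variable [DecidableEq β]

lemma two_pow_count_singleton_mul_le {f g : β → ℝ} {B₀ : β} (hhalf : 2 * f B₀ ≤ g B₀)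
    (heq : ∀ B ≠ B₀, f B = g B) (B : β) : 2 ^ [B₀].count B * f B ≤ g B := by
  by_cases hB : B = B₀
  · subst hB
    simpa using hhalf
  · simp [Ne.symm hB, heq B hB]

variable {place : List ℕ → β × ℝ} {w : ℝ} {p q : β → ℝ} {a b k : ℕ}

lemma ConfinedTo.exists_bisection (hconf : ConfinedTo place w (Ico a b) p q)
    (hplace : PlacesByDecreasingIndex place w) (hpq : p ≤ q) (hroom : a + 2 ^ (k + 1) ≤ b + 1) :
    ∃ c ∈ Ico a b, ∃ a' b' p' q', a' + 2 ^ k ≤ b' + 1 ∧ Ico a' b' ⊆ Ico a b \ {c} ∧ p' ≤ q' ∧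
      ConfinedTo (fun l => place (c :: l)) w (Ico a' b') p' q' ∧
      ∀ B, 2 ^ [(place [c]).1].count B * (q' B - p' B + w) ≤ q B - p B + w := by
  obtain ⟨c, hc⟩ : ∃ c, a + 2 ^ k = c + 1 :=
    Nat.exists_eq_add_one_of_ne_zero (by positivity)
  have hpow : 1 ≤ 2 ^ k := Nat.one_le_two_pow
  rw [pow_succ] at hroom
  have hcab : c ∈ Ico a b := ⟨by omega, by omega⟩
  obtain ⟨hpx : p (place [c]).1 ≤ (place [c]).2, hxq : (place [c]).2 + w ≤ q (place [c]).1⟩ :=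
    hconf [] c hcab
  refine ⟨c, hcab, ?_⟩
  rcases le_total (2 * ((place [c]).2 - p (place [c]).1 + w))
    (q (place [c]).1 - p (place [c]).1 + w) with hleft | hright
  · have hsub : Ico (c + 1) b ⊆ Ico a b \ {c} := fun d ⟨hd, hdb⟩ =>
      ⟨⟨by omega, hdb⟩, (Nat.ne_of_lt hd).symm⟩
    refine ⟨c + 1, b, p, update q (place [c]).1 (place [c]).2, by omega, hsub,
      le_update_iff.2 ⟨hpx, fun B _ => hpq B⟩,
      hconf.above hplace (hsub.trans sdiff_subset) fun d hd => hd.1,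
      two_pow_count_singleton_mul_le ?_ fun B hB => by rw [update_of_ne hB]⟩
    rwa [update_self]
  · have hsub : Ico a c ⊆ Ico a b \ {c} := fun d ⟨had, hd⟩ =>
      ⟨⟨had, hd.trans hcab.2⟩, Nat.ne_of_lt hd⟩
    refine ⟨a, c, update p (place [c]).1 ((place [c]).2 + w), q, by omega, hsub,
      update_le_iff.2 ⟨hxq, fun B _ => hpq B⟩,
      hconf.below hplace (hsub.trans sdiff_subset) fun d hd => hd.2,
      two_pow_count_singleton_mul_le ?_ fun B hB => by rw [update_of_ne hB]⟩
    rw [update_self]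
    linarith

theorem PlacesByDecreasingIndex.exists_injective_two_pow_count_mul_le
    (hplace : PlacesByDecreasingIndex place w) (hconf : ConfinedTo place w (Ico a b) p q)
    (hpq : p ≤ q) (hroom : a + 2 ^ k ≤ b + 1) :
    ∃ idx : Fin k → ℕ, Injective idx ∧ (∀ i, idx i ∈ Ico a b) ∧
      ∀ B, 2 ^ (binSequence place (List.ofFn idx)).count B * w ≤ q B - p B + w := by
  induction k generalizing place a b p q with
  | zero =>
    refine ⟨Fin.elim0, injective_of_subsingleton _, fun i => i.elim0, fun B => ?_⟩
    simpa [binSequence] using hpq B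
  | succ k ih =>
    obtain ⟨c, hc, a', b', p', q', hroom', hsub, hpq', hconf', hhalf⟩ :=
      hconf.exists_bisection hplace hpq hroom
    obtain ⟨idx, hinj, hmem, hcount⟩ := ih (hplace.cons c) hconf' hpq' hroom'
    refine ⟨Fin.cons c idx, Fin.cons_injective_iff.2 ⟨?_, hinj⟩,
      Fin.cases hc fun i => (hsub (hmem i)).1, fun B => ?_⟩
    · rintro ⟨i, hi⟩
      exact (hsub (hmem i)).2 hi
    · rw [List.ofFn_cons, binSequence_cons, ← List.singleton_append, List.count_append, pow_add,
        mul_assoc]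
      exact (mul_le_mul_of_nonneg_left (hcount B) (by positivity)).trans (hhalf B)

end Bisection

lemma length_le_card_toFinset_mul {β : Type*} [DecidableEq β] {l : List β} {K : ℝ}
    (hK : ∀ B, (l.count B : ℝ) ≤ K) : (l.length : ℝ) ≤ l.toFinset.card * K := by
  rw [← List.sum_toFinset_count_eq_length, Nat.cast_sum, ← nsmul_eq_mul]
  exact Finset.sum_le_card_nsmul _ _ _ fun B _ => hK B

section Adversary

/-- The algorithm `A` as seen by the adversary, who presents members of `𝓛ⁿ` by their indices and
observes the bins and the horizontal positions. -/
noncomputable def placeLfam (A : List LShape → ℕ × ℝ × ℝ) (n : ℕ) (l : List ℕ) : ℕ × ℝ :=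
  ((A (l.map (Lfam n))).1, (A (l.map (Lfam n))).2.1)

variable {A : List LShape → ℕ × ℝ × ℝ} {n : ℕ}

lemma binsUsed_map_Lfam (A : List LShape → ℕ × ℝ × ℝ) (n : ℕ) (l : List ℕ) :
    binsUsed A (l.map (Lfam n)) = (binSequence (placeLfam A n) l).toFinset.card := by
  refine congrArg Finset.card (Finset.ext fun B => ?_)
  simp only [binSequence, placeLfam, placeOf, List.map_take, Finset.mem_image, Finset.mem_univ,
    true_and, List.mem_toFinset, List.mem_ofFn]
  exact (finCongr (List.length_map _)).exists_congr fun _ => Iff.rfl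

variable (hA : ∀ l : List ℕ, OnlinePacks A (l.map (Lfam n)))
include hA

lemma planeTranslate_Lfam_subset_unitBin (l : List ℕ) (c : ℕ) :
    planeTranslate (A ((l ++ [c]).map (Lfam n))).2 (Lfam n c).toSet ⊆ unitBin := by
  have h := hA (l ++ [c])
  rw [List.map_append] at h ⊢
  exact h.subset_unitBin

lemma confinedTo_placeLfam (s : Set ℕ) :
    ConfinedTo (placeLfam A n) (1 / (2 * n)) s 0 fun _ => 1 / 2 := by
  intro l c _
  obtain ⟨hx, -, hx', -⟩ := (Lfam_isValid n c).planeTranslate_subset_unitBin_iff.1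
    (planeTranslate_Lfam_subset_unitBin hA l c)
  simp only [Lfam] at hx'
  exact ⟨hx, by simp only [placeLfam]; linarith⟩

lemma placesByDecreasingIndex_placeLfam (hn : n ≠ 0) :
    PlacesByDecreasingIndex (placeLfam A n) (1 / (2 * n)) := by
  intro l c t d hbin
  have hc := planeTranslate_Lfam_subset_unitBin hA l c
  have hd := planeTranslate_Lfam_subset_unitBin hA (l ++ c :: t) d
  have hpack := hA (l ++ c :: (t ++ [d]))
  simp only [placeLfam, List.append_assoc, List.cons_append, List.map_append, List.map_cons,
    List.map_nil] at hbin hc hd hpack ⊢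
  have hdisj := hpack.disjoint_interior hbin
  exact ⟨fun hcd => Lfam_add_le_of_disjoint hn hcd hd hc hdisj.symm,
    fun hdc => Lfam_add_le_of_disjoint hn hdc hc hd hdisj⟩

theorem exists_injective_binSequence_count_le_logb (hn : n ≠ 0) (k : ℕ) :
    ∃ idx : Fin k → ℕ, Injective idx ∧ (∀ i, 1 ≤ idx i) ∧
      ∀ B, ((binSequence (placeLfam A n) (List.ofFn idx)).count B : ℝ) ≤
        Real.logb 2 (n + 1) := by
  obtain ⟨idx, hinj, hmem, hcount⟩ :=
    (placesByDecreasingIndex_placeLfam hA hn).exists_injective_two_pow_count_mul_le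
      (confinedTo_placeLfam hA (Ico 1 (2 ^ k))) (fun _ => by norm_num) (add_comm 1 (2 ^ k)).le
  refine ⟨idx, hinj, fun i => (hmem i).1, fun B => ?_⟩
  rw [Real.le_logb_iff_rpow_le one_lt_two (by positivity), Real.rpow_natCast]
  have hB := hcount B
  simp only [Pi.zero_apply] at hB
  field_simp at hB
  linarith

end Adversary

/-- for every deterministic online bin-packing algorithm for L-shapes and every
`n ≥ 2`, there is a sequence of `n` pairwise distinct L-shapes from `𝓛^n` that packs into a
single unit bin, but on which the algorithm uses at least `n / log₂(n+1)` bins. -/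
theorem stmt4 (A : List LShape → ℕ × ℝ × ℝ)
    (hA : ∀ l : List LShape, (∀ L ∈ l, L.IsValid) → OnlinePacks A l)
    (n : ℕ) (hn : 2 ≤ n) :
    ∃ idx : Fin n → ℕ, Function.Injective idx ∧ (∀ i, 1 ≤ idx i) ∧
      (∃ v : Fin n → ℝ × ℝ,
        (∀ i, planeTranslate (v i) (Lfam n (idx i)).toSet ⊆ unitBin) ∧
        ∀ i j, i ≠ j →
          Disjoint (interior (planeTranslate (v i) (Lfam n (idx i)).toSet))
                   (interior (planeTranslate (v j) (Lfam n (idx j)).toSet))) ∧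
      (n : ℝ) / Real.logb 2 (n + 1) ≤
        (binsUsed A (List.ofFn fun i => Lfam n (idx i)) : ℝ) := by
  have hn₀ : n ≠ 0 := by omega
  have hpacks : ∀ l : List ℕ, OnlinePacks A (l.map (Lfam n)) := fun l =>
    hA _ (List.forall_mem_map.2 fun i _ => Lfam_isValid n i)
  obtain ⟨idx, hinj, hpos, hcount⟩ := exists_injective_binSequence_count_le_logb hpacks hn₀ n
  refine ⟨idx, hinj, hpos, exists_isUnitBinPacking_Lfam (Fintype.card_fin n).le hinj, ?_⟩
  have hlist : (List.ofFn fun i => Lfam n (idx i)) = (List.ofFn idx).map (Lfam n) := by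
    rw [List.map_ofFn]; rfl
  have hlog : 0 < Real.logb 2 (n + 1) := Real.logb_pos one_lt_two (by norm_num; omega)
  rw [hlist, binsUsed_map_Lfam, div_le_iff₀ hlog]
  simpa [length_binSequence] using length_le_card_toFinset_mul hcount
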